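/- Let G be a tree on [n], labeled so that vertex n is a leaf and dist(i,n) ≥ dist(j,n) whenever 1 ≤ i < j ≤ n−1, and let I = I_c(G). Let φ : [n−1] → [n] be the map assigning to k the unique j ∈ [n] with j > k and {k,j} ∈ E(G). Then for all integers 1 ≤ i ≤ s one has the equality of monomial ideals HS_i(I^s) = I^{s−i} · ( α^i / ∏_{k∈F} x_{φ(k)} : F ⊆ [n−2], |F| = i ), where α = x_1⋯x_n. -/

import Mathlib

/-!
The powers of `I = I_c(G)` have linear quotients, and the multigraded Betti numbers of an ideal
with linear quotients are explicit.

The edges of `G` are `{k, φ(k)}` for `k < n`, so `I^s` is generated by the monomials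
`u_c = ∏_k (α / (x_k x_{φ(k)}))^{c_k}` with `∑ c_k = s`. Order the vectors `c` lexicographically.
If `d < c` first differ at `v`, then `v ∈ [n-2]`, `c_v > 0`, and `x_v` has a larger exponent in
`u_d` than in `u_c`, because the edges `{w, v}` with `φ(w) = v` have `w < v` (`ParentMap.lex_lt`).
Conversely, if `v ∈ [n-2]` and `c_v > 0`, trading one edge `{v, φ(v)}` for `{φ(v), φ(φ(v))}`
gives an earlier generator dividing `x_v u_c` (`ParentMap.exchange`). Hence the colon ideal at
`u_c` is generated by the `x_v` with `v ∈ supp(c) ∩ [n-2]`.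

For linear quotients with generators `u_k` of one degree and colon ideals generated by the
variables in `st k`, `Tor_i(K, I)_a ≠ 0` iff `x^a = u_k x_B` with `B ⊆ st k`, `|B| = i`
(`LinQuot.nontrivial_iff`). The degree-`a` strand of the Koszul complex is filtered by the first
generator dividing `x^a / x_F`; the `k`-th graded piece is contracted by exterior multiplication
by some `e_v` (`LinQuot.reduce`), unless it consists of a single critical face `B` with
`x^a = u_k x_B`. All critical faces in multidegree `a` have the same cardinality by degree
reasons, so each of them contributes a nonzero class.

Finally, splitting one copy of each edge of `B` off `c` writes `u_c x_B` as `u_{c'}` times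
`α^i / ∏_{k ∈ B} x_{φ(k)}`, with `u_{c'}` a generator of `I^{s-i}`, and every such product arises.
-/

open MvPolynomial

namespace Paper

noncomputable section

variable (K : Type) [Field K] (n : ℕ)

/-- The polynomial ring `S = K[x_1, …, x_n]`. -/
abbrev S := MvPolynomial (Fin n) K

variable {n}

/-- The squarefree exponent vector of a subset `F ⊆ [n]`. -/
def expF (F : Finset (Fin n)) : Fin n →₀ ℕ := ∑ j ∈ F, Finsupp.single j 1

variable {K}

/-- Basis of the multidegree-`a` component of the `i`-th term of the Koszul
complex of `x_1, …, x_n` tensored with the ideal `I`:  subsets `F` of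
cardinality `i` such that `x^(a - ε_F) ∈ I`. -/
abbrev KB (I : Ideal (S K n)) (a : Fin n →₀ ℕ) (i : ℕ) : Type :=
  {F : Finset (Fin n) // F.card = i ∧ expF F ≤ a ∧
    (monomial (a - expF F) (1 : K) : S K n) ∈ I}

/-- The Koszul differential (in multidegree `a`) from homological degree
`i+1` to `i`. -/
def kd (I : Ideal (S K n)) (a : Fin n →₀ ℕ) (i : ℕ) :
    (KB I a (i + 1) →₀ K) →ₗ[K] (KB I a i →₀ K) :=
  Finsupp.lsum K fun F =>
    LinearMap.toSpanSingleton K _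
      (∑ j ∈ F.1.attach,
        ((-1 : K) ^ ((F.1.filter (fun x => x < j.1)).card)) •
          Finsupp.single
            (⟨F.1.erase j.1, by
              obtain ⟨hcard, hle, hmem⟩ := F.2
              have hj : j.1 ∈ F.1 := j.2
              have herase : expF (F.1.erase j.1) + Finsupp.single j.1 1 = expF F.1 := by
                simpa [expF] using Finset.sum_erase_add F.1 (fun k => Finsupp.single k (1:ℕ)) hj
              refine ⟨by simp [Finset.card_erase_of_mem hj, hcard], ?_, ?_⟩
              · refine le_trans ?_ hle
                rw [← herase]; exact le_add_of_nonneg_right bot_le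
              · have h1 : Finsupp.single j.1 1 ≤ expF F.1 := by
                  rw [← herase]; exact le_add_of_nonneg_left bot_le
                have key : a - expF (F.1.erase j.1) =
                    (a - expF F.1) + Finsupp.single j.1 1 := by
                  have : expF (F.1.erase j.1) = expF F.1 - Finsupp.single j.1 1 := by
                    rw [← herase]; simp
                  rw [this, tsub_tsub_assoc hle h1]
                rw [key]
                have : (monomial ((a - expF F.1) + Finsupp.single j.1 1) (1:K) : S K n)
                    = (monomial (a - expF F.1) (1:K)) * (monomial (Finsupp.single j.1 1) (1:K)) := by
                  rw [monomial_mul, mul_one]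
                rw [this]
                exact Ideal.mul_mem_right _ _ hmem⟩ : KB I a i) (1 : K))

/-- The outgoing Koszul differential from homological degree `i`
(the zero map when `i = 0`). -/
def kdOut (I : Ideal (S K n)) (a : Fin n →₀ ℕ) :
    (i : ℕ) → (KB I a i →₀ K) →ₗ[K] (KB I a (i - 1) →₀ K)
  | 0 => 0
  | (i + 1) => kd I a i

/-- The multidegree-`a` component of `Tor_i^S(K, I)`, computed as the `i`-th
homology of the multidegree-`a` strand of the Koszul complex tensored
with `I`. -/
abbrev Hmod (I : Ideal (S K n)) (a : Fin n →₀ ℕ) (i : ℕ) :=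
  ↥(Submodule.map (Submodule.mkQ (LinearMap.range (kd I a i)))
      (LinearMap.ker (kdOut I a i)))

/-- The `i`-th homological shift ideal `HS_i(I)`, generated by the monomials
`x^a` with `Tor_i^S(K, I)_a ≠ 0`. -/
def HSIdeal (i : ℕ) (I : Ideal (S K n)) : Ideal (S K n) :=
  Ideal.span {p | ∃ a : Fin n →₀ ℕ, Nontrivial (Hmod I a i) ∧ p = monomial a 1}

/-- `I` is a monomial ideal. -/
def IsMonomialIdeal (I : Ideal (S K n)) : Prop :=
  ∃ A : Set (Fin n →₀ ℕ), I = Ideal.span ((fun a => (monomial a 1 : S K n)) '' A)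

/-- `I` has a `d`-linear resolution: `Tor_i^S(K,I)_j = 0` whenever `j ≠ i + d`. -/
def LinearRes (d : ℕ) (I : Ideal (S K n)) : Prop :=
  ∀ (i : ℕ) (a : Fin n →₀ ℕ), (a.sum fun _ e => e) ≠ i + d → Subsingleton (Hmod I a i)

/-- The projective dimension of (a finitely generated multigraded module such
as) `I` over `S`: the largest `i` with `Tor_i^S(K, I) ≠ 0`. -/
def pdim (I : Ideal (S K n)) : ℕ :=
  sSup {i | ∃ a, Nontrivial (Hmod I a i)}

variable (K n)

/-- The graded maximal ideal `𝔪 = (x_1, …, x_n)`. -/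
def maxIdl : Ideal (S K n) := Ideal.span (Set.range X)

/-- The `i`-th squarefree power `𝔪^{[i]} = (x_F : F ⊆ [n], |F| = i)`. -/
def sqPow (i : ℕ) : Ideal (S K n) :=
  Ideal.span {p | ∃ F : Finset (Fin n), F.card = i ∧ p = monomial (expF F) 1}

/-- The exponent vector of `α = x_1⋯x_n`. -/
def aexp : Fin n →₀ ℕ := expF (Finset.univ : Finset (Fin n))

/-- The edge ideal `I(G)` of a graph `G` on `[n]`. -/
def edgeIdeal (G : SimpleGraph (Fin n)) : Ideal (S K n) :=
  Ideal.span {p | ∃ i j, G.Adj i j ∧ p = X i * X j}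

/-- The complementary edge ideal `I_c(G)` of a graph `G` on `[n]`. -/
def compIdeal (G : SimpleGraph (Fin n)) : Ideal (S K n) :=
  Ideal.span {p | ∃ i j, G.Adj i j ∧
    p = monomial (aexp n - Finsupp.single i 1 - Finsupp.single j 1) 1}


variable {K} {n}

end


/-! ### The full Koszul complex -/

section Chains

variable {K : Type} [Field K] {n : ℕ}

lemma expF_apply (F : Finset (Fin n)) (v : Fin n) : expF F v = if v ∈ F then 1 else 0 := by
  classical
  simp [expF, Finsupp.finsetSum_apply, Finsupp.single_apply]

/-- The Koszul sign `(-1)^{#{x ∈ F : x < j}}`. -/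
def sgn (K : Type) [Field K] (j : Fin n) (F : Finset (Fin n)) : K :=
  (-1) ^ (F.filter (fun x => x < j)).card

lemma sgn_mul_self (j : Fin n) (F : Finset (Fin n)) : sgn K j F * sgn K j F = 1 := by
  simp [sgn, ← mul_pow]

lemma sgn_insert_of_lt {j k : Fin n} {F : Finset (Fin n)} (h : k < j) (hk : k ∉ F) :
    sgn K j (insert k F) = - sgn K j F := by
  rw [sgn, Finset.filter_insert, if_pos h, Finset.card_insert_of_notMem (by simp [hk]), pow_succ]
  simp [sgn]

lemma sgn_insert_of_not_lt {j k : Fin n} {F : Finset (Fin n)} (h : ¬ k < j) :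
    sgn K j (insert k F) = sgn K j F := by
  rw [sgn, Finset.filter_insert, if_neg h, sgn]

/-- The Koszul differential on all chains: a chain is a function on the subsets of `[n]`. -/
def bd (f : Finset (Fin n) → K) (G : Finset (Fin n)) : K :=
  ∑ j, if j ∈ G then 0 else sgn K j G * f (insert j G)

/-- Left multiplication by the basis vector `e_v` of the exterior algebra. -/
def wedge (v : Fin n) (f : Finset (Fin n) → K) (G : Finset (Fin n)) : K :=
  if v ∈ G then sgn K v G * f (G.erase v) else 0

lemma bd_sub (f g : Finset (Fin n) → K) : bd (f - g) = bd f - bd g := by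
  funext G
  simp only [bd, Pi.sub_apply, ← Finset.sum_sub_distrib]
  refine Finset.sum_congr rfl fun j _ => ?_
  split_ifs <;> ring

lemma bd_add (f g : Finset (Fin n) → K) : bd (f + g) = bd f + bd g := by
  funext G
  simp only [bd, Pi.add_apply, ← Finset.sum_add_distrib]
  refine Finset.sum_congr rfl fun j _ => ?_
  split_ifs <;> ring

lemma bd_zero : bd (0 : Finset (Fin n) → K) = 0 := by
  funext G
  simp [bd]

lemma exists_of_bd_ne_zero {f : Finset (Fin n) → K} {G : Finset (Fin n)} (h : bd f G ≠ 0) :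
    ∃ j, j ∉ G ∧ f (insert j G) ≠ 0 := by
  obtain ⟨j, -, hj⟩ := Finset.exists_ne_zero_of_sum_ne_zero h
  by_cases hG : j ∈ G
  · simp [hG] at hj
  · exact ⟨j, hG, fun h0 => hj (by simp [h0])⟩

lemma bd_bd (f : Finset (Fin n) → K) : bd (bd f) = 0 := by
  funext G
  have key : bd (bd f) G = ∑ p : Fin n × Fin n, if p.1 ∈ G ∨ p.2 ∈ insert p.1 G then 0 else
      sgn K p.1 G * (sgn K p.2 (insert p.1 G) * f (insert p.2 (insert p.1 G))) := by
    rw [Fintype.sum_prod_type, bd]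
    refine Finset.sum_congr rfl fun j _ => ?_
    by_cases hj : j ∈ G
    · simp [hj]
    · simp only [hj, if_false, false_or, bd, Finset.mul_sum]
      refine Finset.sum_congr rfl fun k _ => ?_
      split_ifs <;> simp
  rw [key]
  -- swapping the two removed elements reverses the sign
  refine Finset.sum_involution (fun p _ => p.swap) ?_ ?_ (by simp) (by simp)
  · rintro ⟨j, k⟩ -
    simp only [Prod.fst_swap, Prod.snd_swap, Finset.mem_insert]
    by_cases hj : j ∈ G
    · simp [hj]
    by_cases hk : k ∈ G
    · simp [hk]
    by_cases hjk : j = k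
    · simp [hjk]
    have hkj : ¬ k = j := fun h => hjk h.symm
    simp only [hj, hk, hjk, hkj, or_self, if_false]
    rw [Finset.insert_comm]
    rcases lt_or_gt_of_ne hjk with h | h
    · rw [sgn_insert_of_lt h hj, sgn_insert_of_not_lt (not_lt.2 h.le)]; ring
    · rw [sgn_insert_of_not_lt (not_lt.2 h.le), sgn_insert_of_lt h hk]; ring
  · rintro ⟨j, k⟩ - hne heq
    apply hne
    have : k = j := congrArg Prod.fst heq
    simp [this]

/-- Multiplication by `e_v` is a contracting homotopy of the full Koszul complex. -/
lemma bd_wedge (v : Fin n) (f : Finset (Fin n) → K) : bd (wedge v f) + wedge v (bd f) = f := by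
  funext G
  rw [Pi.add_apply]
  by_cases hv : v ∈ G
  · rw [wedge, if_pos hv, bd, bd, Finset.mul_sum, ← Finset.sum_add_distrib,
      Finset.sum_eq_single v]
    · obtain ⟨H, hH, rfl⟩ : ∃ H, v ∉ H ∧ G = insert v H :=
        ⟨G.erase v, by simp, by simp [Finset.insert_erase hv]⟩
      simp only [hv, if_true, Finset.erase_insert hH, hH, if_false, zero_add,
        sgn_insert_of_not_lt (lt_irrefl v), ← mul_assoc, sgn_mul_self, one_mul]
    · intro j _ hj
      obtain ⟨H, hH, rfl⟩ : ∃ H, v ∉ H ∧ G = insert v H :=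
        ⟨G.erase v, by simp, by simp [Finset.insert_erase hv]⟩
      by_cases hjH : j ∈ H
      · simp [hjH, Finset.erase_insert hH]
      have hvj : ¬ v = j := fun h => hj h.symm
      have e : (insert j (insert v H)).erase v = insert j H := by
        rw [Finset.insert_comm, Finset.erase_insert (by simp [hH, hvj])]
      have hjG : j ∉ insert v H := by simp [hj, hjH]
      rw [if_neg hjG, wedge, if_pos (by simp), e]
      simp only [Finset.erase_insert hH, hjH, if_false]
      rw [sgn_insert_of_not_lt (k := v) (j := v) (lt_irrefl v), Finset.insert_comm,
        sgn_insert_of_not_lt (k := v) (j := v) (lt_irrefl v)]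
      rcases lt_or_gt_of_ne hj with h | h
      · rw [sgn_insert_of_lt h hjH, sgn_insert_of_not_lt (not_lt.2 h.le)]; ring
      · rw [sgn_insert_of_not_lt (not_lt.2 h.le), sgn_insert_of_lt h hH]; ring
    · simp
  · rw [wedge, if_neg hv, add_zero, bd, Finset.sum_eq_single v]
    · simp only [hv, if_false, wedge, Finset.mem_insert_self, if_true, Finset.erase_insert hv,
        sgn_insert_of_not_lt (lt_irrefl v), ← mul_assoc, sgn_mul_self, one_mul]
    · intro j _ hj
      have hvj : ¬ v = j := fun h => hj h.symm
      simp [wedge, hv, hvj]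
    · simp

end Chains

/-! ### Strands of the Koszul complex of an ideal -/

section Bridge

variable {K : Type} [Field K] {n : ℕ}

/-- Extension by zero of a chain in the degree-`a` strand to a function on all subsets. -/
noncomputable def extZero {I : Ideal (S K n)} {a : Fin n →₀ ℕ} {i : ℕ} (x : KB I a i →₀ K) :
    Finset (Fin n) → K := fun G => Finsupp.mapDomain Subtype.val x G

lemma extZero_val {I : Ideal (S K n)} {a : Fin n →₀ ℕ} {i : ℕ} (x : KB I a i →₀ K) (F : KB I a i) :
    extZero x F.1 = x F :=
  Finsupp.mapDomain_apply Subtype.val_injective x F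

lemma extZero_supp {I : Ideal (S K n)} {a : Fin n →₀ ℕ} {i : ℕ} (x : KB I a i →₀ K)
    (G : Finset (Fin n)) (h : extZero x G ≠ 0) :
    G.card = i ∧ expF G ≤ a ∧ (monomial (a - expF G) (1 : K) : S K n) ∈ I := by
  by_contra hc
  refine h (Finsupp.mapDomain_of_notMem_range x G ?_)
  rintro ⟨F, rfl⟩
  exact hc F.2

lemma extZero_injective {I : Ideal (S K n)} {a : Fin n →₀ ℕ} {i : ℕ} :
    Function.Injective (extZero : (KB I a i →₀ K) → _) := by
  intro x y h
  ext F
  rw [← extZero_val, h, extZero_val]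

lemma extZero_add {I : Ideal (S K n)} {a : Fin n →₀ ℕ} {i : ℕ} (x y : KB I a i →₀ K) :
    extZero (x + y) = extZero x + extZero y := by
  funext G
  simp [extZero, Finsupp.mapDomain_add]

lemma extZero_zero {I : Ideal (S K n)} {a : Fin n →₀ ℕ} {i : ℕ} :
    extZero (0 : KB I a i →₀ K) = 0 := by
  funext G
  simp [extZero]

lemma exists_extZero {I : Ideal (S K n)} {a : Fin n →₀ ℕ} {i : ℕ} (f : Finset (Fin n) → K)
    (hf : ∀ G, f G ≠ 0 → G.card = i ∧ expF G ≤ a ∧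
      (monomial (a - expF G) (1 : K) : S K n) ∈ I) :
    ∃ x : KB I a i →₀ K, extZero x = f := by
  refine ⟨Finsupp.equivFunOnFinite.symm fun F => f F.1, ?_⟩
  funext G
  by_cases h : G.card = i ∧ expF G ≤ a ∧ (monomial (a - expF G) (1 : K) : S K n) ∈ I
  · have := extZero_val (Finsupp.equivFunOnFinite.symm fun F : KB I a i => f F.1) ⟨G, h⟩
    simpa using this
  · rw [not_imp_comm.1 (hf G) h]
    exact not_imp_comm.1 (extZero_supp _ G) h

lemma extZero_kd {I : Ideal (S K n)} {a : Fin n →₀ ℕ} {i : ℕ} (x : KB I a (i + 1) →₀ K) :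
    extZero (kd I a i x) = bd (extZero x) := by
  classical
  induction x using Finsupp.induction_linear with
  | zero => simp [extZero_zero, bd_zero]
  | add x y hx hy => rw [map_add, extZero_add, extZero_add, bd_add, hx, hy]
  | single F r =>
    funext G
    have h1 : extZero (kd I a i (Finsupp.single F r)) G =
        r * ∑ j ∈ F.1, if F.1.erase j = G then sgn K j F.1 else 0 := by
      rw [← Finset.sum_attach F.1]
      simp [kd, extZero, Finsupp.mapDomain_smul, Finsupp.mapDomain_finsetSum,
        Finsupp.mapDomain_single, Finsupp.single_apply, sgn]
    rw [h1, bd, Finset.mul_sum, ← Finset.sum_filter_add_sum_filter_not Finset.univ (· ∈ F.1)]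
    rw [Finset.sum_eq_zero (s := Finset.univ.filter fun x => ¬ x ∈ F.1), add_zero]
    · rw [Finset.filter_univ_mem]
      refine Finset.sum_congr rfl fun j hj => ?_
      simp only [extZero, Finsupp.mapDomain_single, Finsupp.single_apply]
      by_cases hG : j ∈ G
      · rw [if_neg (by rintro rfl; simp at hG)]; simp [hG]
      · by_cases hFG : F.1.erase j = G
        · have hF : F.1 = insert j G := by rw [← hFG, Finset.insert_erase hj]
          simp only [hFG, hG, if_true, if_false]
          rw [if_pos hF, hF, sgn_insert_of_not_lt (lt_irrefl j), mul_comm]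
        · have hF : ¬ F.1 = insert j G := fun h => hFG (by rw [h, Finset.erase_insert hG])
          simp [hFG, hF, hG]
    · intro j hj
      have hj : j ∉ F.1 := by simpa using hj
      have : ¬ F.1 = insert j G := fun h => hj (by rw [h]; simp)
      simp [extZero, Finsupp.mapDomain_single, this]

/-- `Tor_{i+1}(K, I)_a ≠ 0` in terms of chains on all subsets of `[n]`. -/
lemma nontrivial_Hmod_iff (I : Ideal (S K n)) (a : Fin n →₀ ℕ) (i : ℕ) :
    Nontrivial (Hmod I a (i + 1)) ↔ ∃ f : Finset (Fin n) → K,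
      (∀ G, f G ≠ 0 → G.card = i + 1 ∧ expF G ≤ a ∧
        (monomial (a - expF G) (1 : K) : S K n) ∈ I) ∧ bd f = 0 ∧
      ∀ g : Finset (Fin n) → K, (∀ G, g G ≠ 0 → G.card = i + 2 ∧ expF G ≤ a ∧
        (monomial (a - expF G) (1 : K) : S K n) ∈ I) → bd g ≠ f := by
  rw [Submodule.nontrivial_iff_ne_bot, Ne, ← LinearMap.le_ker_iff_map, Submodule.ker_mkQ,
    SetLike.not_le_iff_exists]
  constructor
  · rintro ⟨x, hx, hx'⟩
    refine ⟨extZero x, extZero_supp x, ?_, ?_⟩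
    · have : kd I a i x = 0 := hx
      rw [← extZero_kd, this, extZero_zero]
    · intro g hg hgx
      obtain ⟨y, rfl⟩ := exists_extZero (i := i + 1 + 1) g hg
      rw [← extZero_kd] at hgx
      exact hx' ⟨y, extZero_injective hgx⟩
  · rintro ⟨f, hf, hf0, hfg⟩
    obtain ⟨x, rfl⟩ := exists_extZero f hf
    refine ⟨x, ?_, ?_⟩
    · change kd I a i x = 0
      apply extZero_injective
      rw [extZero_kd, hf0, extZero_zero]
    · rintro ⟨y, rfl⟩
      exact hfg (extZero y) (extZero_supp y) (extZero_kd y).symm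

end Bridge

/-! ### Koszul homology of ideals with linear quotients -/

section LinearQuotients

variable {K : Type} [Field K] {n : ℕ}

/-- The faces `F` for which `x^a / x_F` is divisible by one of the first `k` generators. -/
def Face (u : ℕ → Fin n →₀ ℕ) (a : Fin n →₀ ℕ) (k : ℕ) (F : Finset (Fin n)) : Prop :=
  ∃ d < k, u d + expF F ≤ a

/-- `LinQuot N u st`: the monomials `x^(u 0), …, x^(u (N-1))` have linear quotients, in this
order, and the `k`-th colon ideal is generated by the variables indexed by `st k`. -/
structure LinQuot (N : ℕ) (u : ℕ → Fin n →₀ ℕ) (st : ℕ → Finset (Fin n)) : Prop where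
  lt : ∀ k < N, ∀ d < k, ∃ v ∈ st k, u k v < u d v
  le : ∀ k < N, ∀ v ∈ st k, ∃ d < k, u d ≤ u k + Finsupp.single v 1

variable {N : ℕ} {u : ℕ → Fin n →₀ ℕ} {st : ℕ → Finset (Fin n)} {a : Fin n →₀ ℕ}

lemma expF_mono {F G : Finset (Fin n)} (h : F ⊆ G) : expF F ≤ expF G := by
  intro v
  rw [expF_apply, expF_apply]
  by_cases hv : v ∈ F
  · simp [hv, h hv]
  · simp [hv]

lemma Face.mono {k : ℕ} {F G : Finset (Fin n)} (h : F ⊆ G) (hG : Face u a k G) :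
    Face u a k F := by
  obtain ⟨d, hd, hle⟩ := hG
  exact ⟨d, hd, (add_le_add le_rfl (expF_mono h)).trans hle⟩

lemma Face.of_le {k l : ℕ} (hkl : k ≤ l) {F : Finset (Fin n)} (hF : Face u a k F) :
    Face u a l F := by
  obtain ⟨d, hd, hle⟩ := hF
  exact ⟨d, by omega, hle⟩

lemma Face.le_of_not {k : ℕ} {F : Finset (Fin n)} (hF : Face u a (k + 1) F)
    (hF' : ¬ Face u a k F) : u k + expF F ≤ a := by
  obtain ⟨d, hd, hle⟩ := hF
  rcases Nat.lt_succ_iff_lt_or_eq.1 hd with h | rfl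
  · exact absurd ⟨d, h, hle⟩ hF'
  · exact hle

lemma LinQuot.face_iff (H : LinQuot N u st) {k : ℕ} (hk : k < N) {F : Finset (Fin n)}
    (hF : u k + expF F ≤ a) : Face u a k F ↔ ∃ v ∈ st k, u k v + expF F v < a v := by
  constructor
  · rintro ⟨d, hd, hle⟩
    obtain ⟨v, hv, hlt⟩ := H.lt k hk d hd
    have := hle v
    rw [Finsupp.add_apply] at this
    exact ⟨v, hv, by omega⟩
  · rintro ⟨v, hv, hlt⟩
    obtain ⟨d, hd, hle⟩ := H.le k hk v hv
    refine ⟨d, hd, fun w => ?_⟩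
    have h1 := hle w
    have h2 := hF w
    simp only [Finsupp.add_apply] at h1 h2 ⊢
    by_cases hw : v = w
    · subst hw
      rw [Finsupp.single_eq_same] at h1
      omega
    · rw [Finsupp.single_eq_of_ne' hw] at h1
      omega

/-- A chain on the first `k + 1` generators whose boundary lives on the first `k` can be pushed,
modulo boundaries, to the first `k` generators, unless its degree carries a critical face. The
faces of level `k` are those of the form (fixed subset of `st k`) ∪ (any subset of the support of
`x^a / x^(u k)` outside `st k`), and `wedge v` contracts them as soon as that support contains
some `v ∉ st k`. -/
lemma LinQuot.reduce (H : LinQuot N u st) {k : ℕ} (hk : k < N) {i : ℕ}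
    (hcrit : ¬ ∃ B ⊆ st k, B.card = i ∧ a = u k + expF B)
    (f : Finset (Fin n) → K) (hf : ∀ F, f F ≠ 0 → F.card = i ∧ Face u a (k + 1) F)
    (hbf : ∀ F, bd f F ≠ 0 → Face u a k F) :
    ∃ g : Finset (Fin n) → K, (∀ F, g F ≠ 0 → F.card = i + 1 ∧ Face u a (k + 1) F) ∧
      ∀ F, (f - bd g) F ≠ 0 → F.card = i ∧ Face u a k F := by
  classical
  by_cases hv : ∃ v, v ∉ st k ∧ u k v < a v
  · obtain ⟨v, hvst, hva⟩ := hv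
    set f' : Finset (Fin n) → K := fun F => if Face u a k F then 0 else f F with hf'
    have hg : ∀ F, wedge v f' F ≠ 0 → F.card = i + 1 ∧ Face u a (k + 1) F := by
      intro F hF
      have hvF : v ∈ F := by by_contra h; exact hF (by simp [wedge, h])
      obtain ⟨E, hE, rfl⟩ : ∃ E, v ∉ E ∧ F = insert v E :=
        ⟨F.erase v, by simp, by simp [Finset.insert_erase hvF]⟩
      have hfE : f' E ≠ 0 := fun h => hF (by simp [wedge, Finset.erase_insert hE, h])
      have hEk : ¬ Face u a k E := fun h => hfE (by simp [hf', h])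
      have hfE' : f E ≠ 0 := by simpa [hf', hEk] using hfE
      refine ⟨by rw [Finset.card_insert_of_notMem hE, (hf E hfE').1], k, by omega, fun w => ?_⟩
      have := (hf E hfE').2.le_of_not hEk w
      rw [Finsupp.add_apply, expF_apply] at this ⊢
      by_cases hw : w = v
      · subst hw; simp; omega
      · simpa [hw] using this
    refine ⟨wedge v f', hg, fun F hF => ?_⟩
    have hcard : F.card = i ∧ Face u a (k + 1) F := by
      by_cases h0 : f F = 0
      · have : bd (wedge v f') F ≠ 0 := fun h => hF (by simp [h0, h])
        obtain ⟨j, hj, hj'⟩ := exists_of_bd_ne_zero this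
        have := hg _ hj'
        rw [Finset.card_insert_of_notMem hj] at this
        exact ⟨by omega, this.2.mono (Finset.subset_insert _ _)⟩
      · exact hf F h0
    refine ⟨hcard.1, ?_⟩
    by_contra hFk
    have hFa := hcard.2.le_of_not hFk
    apply hF
    have h1 : bd (wedge v f') F = f' F - wedge v (bd f') F := by
      have := congrFun (bd_wedge v f') F
      rw [Pi.add_apply] at this
      rw [← this]; ring
    have h2 : f' F = f F := by simp [hf', hFk]
    suffices h3 : wedge v (bd f') F = 0 by
      rw [Pi.sub_apply, h1, h2, h3]; ring
    by_cases hvF : v ∈ F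
    · have hEk : ¬ Face u a k (F.erase v) := by
        intro h
        have hle : u k + expF (F.erase v) ≤ a :=
          (add_le_add le_rfl (expF_mono (Finset.erase_subset v F))).trans hFa
        obtain ⟨w, hw, hlt⟩ := (H.face_iff hk hle).1 h
        refine hFk ((H.face_iff hk hFa).2 ⟨w, hw, ?_⟩)
        have hwv : w ≠ v := fun h => hvst (h ▸ hw)
        rw [expF_apply] at hlt ⊢
        simpa [hwv] using hlt
      have h4 : bd f' (F.erase v) = bd f (F.erase v) := by
        refine Finset.sum_congr rfl fun j _ => ?_
        have : ¬ Face u a k (insert j (F.erase v)) :=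
          fun h => hEk (h.mono (Finset.subset_insert _ _))
        simp only [hf', this, if_false]
      have h5 : bd f (F.erase v) = 0 := by
        by_contra h; exact hEk (hbf _ h)
      simp [wedge, h4, h5]
    · simp [wedge, hvF]
  · -- all of the support of `x^a / x^(u k)` is in `st k`, so a face of level `k` is critical
    push Not at hv
    refine ⟨0, by simp, fun F hF => ?_⟩
    have hF : f F ≠ 0 := by simpa [bd_zero] using hF
    refine ⟨(hf F hF).1, ?_⟩
    by_contra hFk
    have hFa := (hf F hF).2.le_of_not hFk
    refine hcrit ⟨F, fun v hvF => ?_, (hf F hF).1, ?_⟩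
    · by_contra hvst
      have h1 := hv v hvst
      have h2 := hFa v
      simp [expF_apply, hvF] at h2
      omega
    · ext v
      have h2 := hFa v
      rw [Finsupp.add_apply] at h2 ⊢
      by_cases hvst : v ∈ st k
      · have : ¬ (u k v + expF F v < a v) :=
          fun h => hFk ((H.face_iff hk hFa).2 ⟨v, hvst, h⟩)
        omega
      · have h1 := hv v hvst
        omega

/-- The homology of the first `k` generators vanishes in every degree without critical faces. -/
lemma LinQuot.exact (H : LinQuot N u st) {i : ℕ} : ∀ k ≤ N,
    (¬ ∃ d < k, ∃ B ⊆ st d, B.card = i ∧ a = u d + expF B) →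
    ∀ f : Finset (Fin n) → K, (∀ F, f F ≠ 0 → F.card = i ∧ Face u a k F) → bd f = 0 →
    ∃ g : Finset (Fin n) → K, (∀ F, g F ≠ 0 → F.card = i + 1 ∧ Face u a k F) ∧ bd g = f := by
  intro k
  induction k with
  | zero =>
    intro _ _ f hf _
    refine ⟨0, by simp, ?_⟩
    rw [bd_zero]
    funext F
    by_contra h
    obtain ⟨d, hd, -⟩ := (hf F (Ne.symm h)).2
    omega
  | succ k ih =>
    intro hk hcrit f hf hf0
    obtain ⟨g, hg, hfg⟩ := H.reduce hk (fun h => hcrit ⟨k, by omega, h⟩) f hf (by simp [hf0])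
    obtain ⟨g', hg', hbg'⟩ := ih (by omega)
      (fun ⟨d, hd, h⟩ => hcrit ⟨d, by omega, h⟩) (f - bd g) hfg (by rw [bd_sub, bd_bd, hf0, sub_zero])
    refine ⟨g' + g, fun F hF => ?_, by rw [bd_add, hbg']; abel⟩
    by_cases h0 : g F = 0
    · have := hg' F (by simpa [h0] using hF)
      exact ⟨this.1, this.2.of_le (by omega)⟩
    · exact hg F h0

/-- Let `z` be a chain on the first `k₀ + 1` generators whose coefficient at some face `B` of level
`k₀` is nonzero. If there are no faces of degree `i` at level `k₀` and no critical faces of degree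
`i` among the first `k` generators, then `z` is not the boundary of a chain of degree `i` there:
such a chain could be pushed down to the first `k₀` generators, which do not see `B`. -/
lemma LinQuot.not_bd (H : LinQuot N u st) {i k₀ : ℕ} {B : Finset (Fin n)}
    {z : Finset (Fin n) → K} (hz : ∀ F, z F ≠ 0 → Face u a (k₀ + 1) F) (hzB : z B ≠ 0)
    (hB : ¬ Face u a k₀ B) : ∀ k ≤ N, k₀ ≤ k →
    (¬ ∃ d < k, ∃ B ⊆ st d, B.card = i ∧ a = u d + expF B) →
    (∀ F, u k₀ + expF F ≤ a → ¬ Face u a k₀ F → F.card ≠ i) →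
    ∀ g : Finset (Fin n) → K, (∀ F, g F ≠ 0 → F.card = i ∧ Face u a k F) → bd g ≠ z := by
  intro k
  induction k with
  | zero =>
    intro _ hk₀ _ _ g hg hgz
    rw [← hgz] at hzB
    obtain ⟨j, -, hj⟩ := exists_of_bd_ne_zero hzB
    obtain ⟨d, hd, -⟩ := (hg _ hj).2
    omega
  | succ k ih =>
    intro hk hk₀ hcrit hlev g hg hgz
    by_cases hkk : k₀ = k + 1
    · subst hkk
      rw [← hgz] at hzB
      obtain ⟨j, -, hj⟩ := exists_of_bd_ne_zero hzB
      exact hB ((hg _ hj).2.mono (Finset.subset_insert _ _))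
    have hih := ih (by omega) (by omega) (fun ⟨d, hd, h⟩ => hcrit ⟨d, by omega, h⟩) hlev
    by_cases hkk' : k₀ = k
    · subst hkk'
      refine hih g (fun F hF => ⟨(hg F hF).1, ?_⟩) hgz
      by_contra h
      exact hlev F ((hg F hF).2.le_of_not h) h (hg F hF).1
    · obtain ⟨y, hy, hgy⟩ := H.reduce hk (fun h => hcrit ⟨k, by omega, h⟩) g hg
        (by rw [hgz]; exact fun F hF => (hz F hF).of_le (by omega))
      exact hih (g - bd y) hgy (by rw [bd_sub, bd_bd, hgz, sub_zero])

/-- Multigraded Betti numbers of an ideal with linear quotients generated in one degree: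
`Tor_{i+1}(K, I)_a ≠ 0` exactly when `x^a = x^(u k) x_B` with `B ⊆ st k`, `|B| = i + 1`. -/
lemma LinQuot.nontrivial_iff (H : LinQuot N u st) {δ : ℕ}
    (hdeg : ∀ k < N, ∑ v, u k v = δ) (I : Ideal (S K n))
    (hI : ∀ b : Fin n →₀ ℕ, (monomial b (1 : K) : S K n) ∈ I ↔ ∃ k < N, u k ≤ b)
    (a : Fin n →₀ ℕ) (i : ℕ) :
    Nontrivial (Hmod I a (i + 1)) ↔
      ∃ k < N, ∃ B ⊆ st k, B.card = i + 1 ∧ a = u k + expF B := by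
  have hface : ∀ F, (expF F ≤ a ∧ (monomial (a - expF F) (1 : K) : S K n) ∈ I) ↔
      Face u a N F := by
    intro F
    rw [hI]
    constructor
    · rintro ⟨h, k, hk, hle⟩
      exact ⟨k, hk, by simpa [tsub_add_cancel_of_le h] using add_le_add_left hle (expF F)⟩
    · rintro ⟨k, hk, hle⟩
      exact ⟨le_trans (le_add_of_nonneg_left bot_le) hle, k, hk, le_tsub_of_add_le_right hle⟩
  have hcard : ∀ B : Finset (Fin n), ∑ v, expF B v = B.card := by
    intro B
    simp [expF_apply]
  have huniq : ∀ k < N, ∀ l < N, ∀ B C : Finset (Fin n), a = u k + expF B → a = u l + expF C →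
      B.card = C.card := by
    intro k hk l hl B C h1 h2
    have h3 : ∑ v, (u k + expF B) v = ∑ v, (u l + expF C) v := by rw [← h1, ← h2]
    simp only [Finsupp.add_apply, Finset.sum_add_distrib, hdeg k hk, hdeg l hl, hcard] at h3
    omega
  rw [nontrivial_Hmod_iff]
  simp only [hface]
  constructor
  · rintro ⟨f, hf, hf0, hfg⟩
    by_contra hcrit
    obtain ⟨g, hg, hgf⟩ := H.exact N le_rfl hcrit f hf hf0
    exact hfg g hg hgf
  · rintro ⟨k, hk, B, hB, hBc, ha⟩
    have hBa : u k + expF B ≤ a := ha.ge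
    have hBk : ¬ Face u a k B := by
      rw [H.face_iff hk hBa]
      rintro ⟨v, -, hv⟩
      rw [ha, Finsupp.add_apply] at hv
      omega
    -- `B` is the only face of level `k`
    have honly : ∀ F, u k + expF F ≤ a → ¬ Face u a k F → F = B := by
      intro F hF hFk
      rw [H.face_iff hk hF] at hFk
      push Not at hFk
      ext v
      have h1 := hF v
      rw [ha, Finsupp.add_apply, Finsupp.add_apply, expF_apply, expF_apply] at h1
      constructor
      · intro hv
        by_contra hvB
        simp [hv, hvB] at h1
      · intro hv
        by_contra hvF
        have := hFk v (hB hv)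
        rw [ha, Finsupp.add_apply, expF_apply, expF_apply] at this
        simp [hv, hvF] at this
    -- `bd e` is a cycle on the earlier generators, so it bounds some `w` there; `e - w` is the
    -- required cycle
    set e : Finset (Fin n) → K := Pi.single B 1 with he
    have heF : ∀ F, e F ≠ 0 → F = B := by
      intro F hF
      by_contra h
      exact hF (by simp [he, h])
    obtain ⟨w, hw, hbw⟩ := H.exact (K := K) (a := a) (i := i) k hk.le
      (by
        rintro ⟨d, hd, C, -, hC, hCa⟩
        have := huniq k hk d (by omega) B C ha hCa
        omega) (bd e) (by
        intro F hF
        obtain ⟨j, hj, hj'⟩ := exists_of_bd_ne_zero hF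
        have hjB := heF _ hj'
        refine ⟨by rw [← hjB, Finset.card_insert_of_notMem hj] at hBc; omega, ?_⟩
        by_contra hFk
        have : F = B := honly F
          ((add_le_add le_rfl (expF_mono (hjB ▸ Finset.subset_insert j F))).trans hBa) hFk
        subst this
        exact hj (hjB ▸ Finset.mem_insert_self j _)) (bd_bd e)
    have hwB : w B = 0 := by
      by_contra h
      exact hBk (hw B h).2
    have hz : ∀ F, (e - w) F ≠ 0 → F.card = i + 1 ∧ Face u a (k + 1) F := by
      intro F hF
      by_cases h0 : w F = 0
      · obtain rfl := heF F (by simpa [h0] using hF)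
        exact ⟨hBc, k, by omega, hBa⟩
      · exact ⟨(hw F h0).1, (hw F h0).2.of_le (by omega)⟩
    refine ⟨e - w, fun F hF => ⟨(hz F hF).1, (hz F hF).2.of_le hk⟩,
      by rw [bd_sub, hbw, sub_self], fun g hg => ?_⟩
    refine H.not_bd (i := i + 2) (fun F hF => (hz F hF).2) (B := B) (by simp [hwB, he]) hBk
      N le_rfl hk.le ?_ ?_ g hg
    · rintro ⟨d, hd, C, -, hC, hCa⟩
      have := huniq k hk d (by omega) B C ha hCa
      omega
    · intro F hF hFk
      rw [honly F hF hFk, hBc]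
      omega

end LinearQuotients

/-! ### Powers of the complementary edge ideal of a tree -/

section Tree

variable {K : Type} [Field K] {n : ℕ}

/-- A finite subset of a linear order, listed increasingly. -/
lemma exists_enum {α : Type*} [LinearOrder α] [Inhabited α] (T : Finset α) :
    ∃ e : ℕ → α, (∀ k < T.card, e k ∈ T) ∧ (∀ x ∈ T, ∃ k < T.card, e k = x) ∧
      ∀ k < T.card, ∀ l < T.card, e k < e l ↔ k < l := by
  refine ⟨fun k => if h : k < T.card then T.orderEmbOfFin rfl ⟨k, h⟩ else default, ?_, ?_, ?_⟩
  · intro k hk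
    simp only [hk, dif_pos]
    exact T.orderEmbOfFin_mem rfl _
  · intro x hx
    have : x ∈ Set.range (T.orderEmbOfFin rfl) := by
      rw [Finset.range_orderEmbOfFin]; exact hx
    obtain ⟨k, hk⟩ := this
    exact ⟨k.1, k.2, by simp [hk]⟩
  · intro k hk l hl
    simp [hk, hl]

/-- Exponent vector of `α / (x_k x_{φ(k)})`, the generator of the edge `{k, φ(k)}`. -/
noncomputable def edgeExp (phi : Fin n → Fin n) (k : Fin n) : Fin n →₀ ℕ :=
  aexp n - Finsupp.single k 1 - Finsupp.single (phi k) 1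

/-- Exponent vector of `∏_k (α / (x_k x_{φ(k)}))^{c_k}`. -/
noncomputable def genExp (phi : Fin n → Fin n) (c : Fin n → ℕ) : Fin n →₀ ℕ :=
  ∑ k, c k • edgeExp phi k

lemma aexp_apply (v : Fin n) : aexp n v = 1 := by
  simp [aexp, expF_apply]

lemma edgeExp_apply {phi : Fin n → Fin n} {k : Fin n} (hk : k ≠ phi k) (v : Fin n) :
    edgeExp phi k v + ((if k = v then 1 else 0) + if phi k = v then 1 else 0) = 1 := by
  simp only [edgeExp, Finsupp.tsub_apply, aexp_apply, Finsupp.single_apply]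
  split_ifs with h1 h2
  · exact absurd (h1.trans h2.symm) hk
  all_goals simp

lemma edgeExp_add_single {phi : Fin n → Fin n} {k : Fin n} (hk : k ≠ phi k) :
    edgeExp phi k + Finsupp.single k 1 + Finsupp.single (phi k) 1 = aexp n := by
  ext v
  have := edgeExp_apply hk v
  simp only [Finsupp.add_apply, aexp_apply, Finsupp.single_apply]
  omega

lemma genExp_apply (phi : Fin n → Fin n) (c : Fin n → ℕ) (v : Fin n) :
    genExp phi c v = ∑ k, c k * edgeExp phi k v := by
  simp [genExp, Finsupp.finsetSum_apply]

lemma genExp_add (phi : Fin n → Fin n) (c d : Fin n → ℕ) :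
    genExp phi (c + d) = genExp phi c + genExp phi d := by
  simp [genExp, add_smul, Finset.sum_add_distrib]

lemma genExp_single (phi : Fin n → Fin n) (k : Fin n) :
    genExp phi (Pi.single k 1) = edgeExp phi k := by
  rw [genExp, Finset.sum_eq_single k] <;> simp +contextual

/-- The exponents of `v` in `x^(genExp c)` and in the product of the chosen edges add up to the
number of edges. -/
lemma genExp_apply_add {phi : Fin n → Fin n} {c : Fin n → ℕ} (hc : ∀ k, c k ≠ 0 → k ≠ phi k)
    (v : Fin n) :
    genExp phi c v + ∑ k, c k * ((if k = v then 1 else 0) + if phi k = v then 1 else 0) =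
      ∑ k, c k := by
  rw [genExp_apply, ← Finset.sum_add_distrib]
  refine Finset.sum_congr rfl fun k _ => ?_
  by_cases h : c k = 0
  · simp [h]
  · rw [← mul_add, edgeExp_apply (hc k h), mul_one]

lemma sum_genExp {phi : Fin n → Fin n} {c : Fin n → ℕ} (hc : ∀ k, c k ≠ 0 → k ≠ phi k) :
    ∑ v, genExp phi c v = (∑ k, c k) * (n - 2) := by
  simp only [genExp_apply]
  rw [Finset.sum_comm, Finset.sum_mul]
  refine Finset.sum_congr rfl fun k _ => ?_
  by_cases h : c k = 0
  · simp [h]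
  · rw [← Finset.mul_sum]
    congr 1
    have h1 : ∑ v, (edgeExp phi k v + ((if k = v then 1 else 0) + if phi k = v then 1 else 0)) =
        ∑ v : Fin n, 1 := Finset.sum_congr rfl fun v _ => edgeExp_apply (hc k h) v
    simp only [Finset.sum_add_distrib, Finset.sum_ite_eq, Finset.mem_univ, if_true,
      Finset.sum_const, Finset.card_univ, Fintype.card_fin, smul_eq_mul, mul_one] at h1
    omega

/-- What the proof uses of the labelled tree: with `r` the last vertex, the edges are
the pairs `{k, φ(k)}` with `k ≠ r`, where `k < φ(k)`, and `φ` avoids `r` on the first `n - 2`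
vertices. -/
structure ParentMap (G : SimpleGraph (Fin n)) (phi : Fin n → Fin n) (r : Fin n) : Prop where
  val_r : (r : ℕ) = n - 1
  lt : ∀ k, k ≠ r → k < phi k
  adj : ∀ k, k ≠ r → G.Adj k (phi k)
  eq : ∀ k j, k < j → G.Adj k j → j = phi k
  ne : ∀ k : Fin n, (k : ℕ) < n - 2 → phi k ≠ r

variable {G : SimpleGraph (Fin n)} {phi : Fin n → Fin n} {r : Fin n}

/-- The multiplicity functions of `s` edges. -/
def Mult (r : Fin n) (s : ℕ) (c : Fin n → ℕ) : Prop := c r = 0 ∧ ∑ k, c k = s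

lemma Mult.ne {s : ℕ} {c : Fin n → ℕ} (hc : Mult r s c) {k : Fin n} (hk : c k ≠ 0) : k ≠ r :=
  fun h => hk (h ▸ hc.1)

lemma Mult.ne_phi (P : ParentMap G phi r) {s : ℕ} {c : Fin n → ℕ} (hc : Mult r s c) (k : Fin n)
    (hk : c k ≠ 0) : k ≠ phi k :=
  (P.lt k (hc.ne hk)).ne

lemma ParentMap.compIdeal_eq (P : ParentMap G phi r) : compIdeal K n G =
    Ideal.span {p | ∃ k, k ≠ r ∧ p = monomial (edgeExp phi k) 1} := by
  rw [compIdeal]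
  congr 1
  have key : ∀ i j, i < j → G.Adj i j → i ≠ r ∧ j = phi i := fun i j hij h =>
    ⟨fun h' => by
      have h1 := P.val_r
      have h2 := j.2
      have h3 : (i : ℕ) < j := hij
      rw [h'] at h3
      omega, P.eq i j hij h⟩
  ext p
  constructor
  · rintro ⟨i, j, h, rfl⟩
    rcases lt_or_gt_of_ne h.ne with hij | hij
    · obtain ⟨h1, rfl⟩ := key i j hij h
      exact ⟨i, h1, rfl⟩
    · obtain ⟨h1, rfl⟩ := key j i hij h.symm
      exact ⟨j, h1, by rw [edgeExp, tsub_right_comm]⟩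
  · rintro ⟨k, hk, rfl⟩
    exact ⟨k, phi k, P.adj k hk, rfl⟩

lemma ParentMap.compIdeal_pow (P : ParentMap G phi r) (s : ℕ) : compIdeal K n G ^ s =
    Ideal.span {p | ∃ c, Mult r s c ∧ p = monomial (genExp phi c) 1} := by
  induction s with
  | zero =>
    rw [pow_zero, Ideal.one_eq_top, eq_comm, Ideal.eq_top_iff_one]
    exact Ideal.subset_span ⟨0, ⟨rfl, by simp⟩, by simp [genExp]⟩
  | succ s ih =>
    rw [pow_succ, ih, P.compIdeal_eq, Ideal.span_mul_span']
    congr 1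
    ext p
    rw [Set.mem_mul]
    constructor
    · rintro ⟨_, ⟨c, hc, rfl⟩, _, ⟨k, hk, rfl⟩, rfl⟩
      refine ⟨c + Pi.single k 1, ⟨by simp [hc.1, Ne.symm hk], by
        simp [Finset.sum_add_distrib, hc.2]⟩, ?_⟩
      rw [genExp_add, genExp_single, monomial_mul, one_mul]
    · rintro ⟨c, hc, rfl⟩
      obtain ⟨k, -, hk⟩ : ∃ k ∈ Finset.univ, c k ≠ 0 :=
        Finset.exists_ne_zero_of_sum_ne_zero (by rw [hc.2]; omega)
      obtain ⟨d, rfl⟩ : ∃ d, c = d + Pi.single k 1 := by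
        refine ⟨c - Pi.single k 1, (tsub_add_cancel_of_le fun j => ?_).symm⟩
        by_cases h : j = k
        · subst h; simp; omega
        · simp [h]
      refine ⟨_, ⟨d, ⟨?_, ?_⟩, rfl⟩, _, ⟨k, hc.ne hk, rfl⟩, ?_⟩
      · have := hc.1
        simp only [Pi.add_apply] at this
        omega
      · have := hc.2
        simp [Finset.sum_add_distrib] at this
        omega
      · rw [genExp_add, genExp_single, monomial_mul, one_mul]

/-- The variables generating the colon ideal at `x^(genExp c)`: `supp(c) ∩ [n-2]`. -/
def colonSet (c : Fin n → ℕ) : Finset (Fin n) :=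
  Finset.univ.filter fun k => c k ≠ 0 ∧ (k : ℕ) < n - 2

/-- If `d` precedes `c` lexicographically, the first place where they differ is a variable of
`colonSet c` with a strictly larger exponent in the generator of `d`: edges through `v` other than
`{v, φ(v)}` come from vertices below `v`, where `c` and `d` agree. -/
lemma ParentMap.lex_lt (P : ParentMap G phi r) {s : ℕ} {c d : Fin n → ℕ} (hc : Mult r s c)
    (hd : Mult r s d) (h : toLex d < toLex c) :
    ∃ v ∈ colonSet c, genExp phi c v < genExp phi d v := by
  obtain ⟨v, hv, hlt⟩ := h
  change ∀ j, j < v → d j = c j at hv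
  change d v < c v at hlt
  have hvr : v ≠ r := hc.ne (by omega)
  have hvn : (v : ℕ) < n - 2 := by
    by_contra hcon
    have h1 := P.val_r
    have hne : (v : ℕ) ≠ r := fun h => hvr (Fin.ext h)
    have h2 := v.2
    have : ∑ k, d k < ∑ k, c k := by
      refine Finset.sum_lt_sum (fun k _ => ?_) ⟨v, Finset.mem_univ _, hlt⟩
      rcases lt_trichotomy k v with hk | rfl | hk
      · exact (hv k hk).le
      · exact hlt.le
      · have hkr : k = r := Fin.ext (by have h3 : (v : ℕ) < k := hk; have := k.2; omega)
        rw [hkr, hc.1, hd.1]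
    rw [hc.2, hd.2] at this
    omega
  refine ⟨v, by simp [colonSet, hvn]; omega, ?_⟩
  have h1 := genExp_apply_add (hc.ne_phi P) v
  have h2 := genExp_apply_add (hd.ne_phi P) v
  rw [hc.2] at h1
  rw [hd.2] at h2
  suffices h3 : ∑ k, d k * ((if k = v then 1 else 0) + if phi k = v then 1 else 0) <
      ∑ k, c k * ((if k = v then 1 else 0) + if phi k = v then 1 else 0) by omega
  refine Finset.sum_lt_sum (fun k _ => ?_) ⟨v, Finset.mem_univ _, ?_⟩
  · by_cases hk : k = v
    · subst hk; exact Nat.mul_le_mul_right _ hlt.le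
    · by_cases hk' : phi k = v
      · by_cases hkr : k = r
        · rw [hkr, hc.1, hd.1]
        · rw [hv k (hk' ▸ P.lt k hkr)]
      · simp [hk, hk']
  · exact Nat.mul_lt_mul_of_pos_right hlt (by simp)

/-- Replacing one edge `{v, φ(v)}` by `{φ(v), φ(φ(v))}` gives an earlier generator dividing
`x_v` times the given one. -/
lemma ParentMap.exchange (P : ParentMap G phi r) {s : ℕ} {c : Fin n → ℕ} (hc : Mult r s c)
    {v : Fin n} (hv : v ∈ colonSet c) :
    ∃ d, Mult r s d ∧ toLex d < toLex c ∧
      genExp phi d ≤ genExp phi c + Finsupp.single v 1 := by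
  simp only [colonSet, Finset.mem_filter, Finset.mem_univ, true_and] at hv
  obtain ⟨hcv, hvn⟩ := hv
  have hvr := hc.ne hcv
  have hpr := P.ne v hvn
  have hlt := P.lt v hvr
  have hlt' := P.lt _ hpr
  obtain ⟨b, rfl⟩ : ∃ b, c = b + Pi.single v 1 := by
    refine ⟨c - Pi.single v 1, (tsub_add_cancel_of_le fun j => ?_).symm⟩
    by_cases h : j = v
    · subst h; simp; omega
    · simp [h]
  refine ⟨b + Pi.single (phi v) 1, ⟨?_, ?_⟩, ⟨v, ?_, ?_⟩, ?_⟩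
  · have := hc.1
    simp [hvr.symm] at this
    simp [this, hpr.symm]
  · rw [← hc.2]
    simp [Finset.sum_add_distrib]
  · intro j hj
    change (b + Pi.single (phi v) 1 : Fin n → ℕ) j = (b + Pi.single v 1 : Fin n → ℕ) j
    simp [hj.ne, (hj.trans hlt).ne]
  · change (b + Pi.single (phi v) 1 : Fin n → ℕ) v < (b + Pi.single v 1 : Fin n → ℕ) v
    simp [hlt.ne]
  · rw [genExp_add, genExp_add, genExp_single, genExp_single, add_assoc]
    refine add_le_add le_rfl fun w => ?_
    have h1 := edgeExp_apply hlt.ne w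
    have h2 := edgeExp_apply hlt'.ne w
    rw [Finsupp.add_apply, Finsupp.single_apply]
    split_ifs at * <;> omega

lemma genExp_indicator_add (B : Finset (Fin n)) (hB : ∀ k ∈ B, k ≠ phi k) :
    genExp phi (fun k => if k ∈ B then 1 else 0) + expF B =
      B.card • aexp n - ∑ k ∈ B, Finsupp.single (phi k) 1 := by
  have : B.card • aexp n = genExp phi (fun k => if k ∈ B then 1 else 0) + expF B +
      ∑ k ∈ B, Finsupp.single (phi k) 1 := by
    have : genExp phi (fun k => if k ∈ B then 1 else 0) = ∑ k ∈ B, edgeExp phi k := by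
      simp [genExp, ite_smul]
    rw [this, expF, ← Finset.sum_add_distrib, ← Finset.sum_add_distrib,
      Finset.sum_congr rfl fun k hk => edgeExp_add_single (hB k hk), Finset.sum_const]
  rw [this, add_tsub_cancel_right]

lemma ParentMap.nontrivial_iff (P : ParentMap G phi r) (s i : ℕ) (a : Fin n →₀ ℕ) :
    Nontrivial (Hmod (compIdeal K n G ^ s) a (i + 1)) ↔ ∃ c, Mult r s c ∧
      ∃ B ⊆ colonSet c, B.card = i + 1 ∧ a = genExp phi c + expF B := by
  classical
  let T : Finset (Lex (Fin n → ℕ)) :=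
    ((Finset.piAntidiag Finset.univ s).filter fun c => c r = 0).map toLex.toEmbedding
  have hT : ∀ c : Fin n → ℕ, toLex c ∈ T ↔ Mult r s c := by
    intro c
    simp [T, Mult, and_comm]
  obtain ⟨e, heT, hesurj, hlt⟩ := exists_enum T
  have heM : ∀ k < T.card, Mult r s (ofLex (e k)) := fun k hk => (hT _).1 (heT k hk)
  have hex : ∀ c, Mult r s c → ∃ k < T.card, e k = toLex c := fun c hc => hesurj _ ((hT c).2 hc)
  have H : LinQuot T.card (fun k => genExp phi (ofLex (e k))) (fun k => colonSet (ofLex (e k))) :=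
    { lt := fun k hk d hd => P.lex_lt (heM k hk) (heM d (hd.trans hk))
        ((hlt d (hd.trans hk) k hk).2 hd)
      le := fun k hk v hv => by
        obtain ⟨c, hc, hcl, hle⟩ := P.exchange (heM k hk) hv
        obtain ⟨d, hd, hdc⟩ := hex c hc
        refine ⟨d, (hlt d hd k hk).1 (hdc ▸ hcl), ?_⟩
        rw [hdc]
        exact hle }
  rw [H.nontrivial_iff (δ := s * (n - 2))]
  · constructor
    · rintro ⟨k, hk, h⟩
      exact ⟨_, heM k hk, h⟩
    · rintro ⟨c, hc, h⟩
      obtain ⟨k, hk, hkc⟩ := hex c hc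
      refine ⟨k, hk, ?_⟩
      rw [hkc]
      exact h
  · intro k hk
    rw [sum_genExp ((heM k hk).ne_phi P), (heM k hk).2]
  · intro b
    have hset : {p : S K n | ∃ c, Mult r s c ∧ p = monomial (genExp phi c) 1} =
        (fun m => (monomial m 1 : S K n)) '' {m | ∃ c, Mult r s c ∧ m = genExp phi c} := by
      ext p
      constructor
      · rintro ⟨c, hc, rfl⟩
        exact ⟨_, ⟨c, hc, rfl⟩, rfl⟩
      · rintro ⟨_, ⟨c, hc, rfl⟩, rfl⟩
        exact ⟨c, hc, rfl⟩
    rw [P.compIdeal_pow, hset, mem_ideal_span_monomial_image]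
    simp only [support_monomial, one_ne_zero, if_false, Finset.mem_singleton, forall_eq]
    constructor
    · rintro ⟨_, ⟨c, hc, rfl⟩, hle⟩
      obtain ⟨k, hk, hkc⟩ := hex c hc
      exact ⟨k, hk, by rw [hkc]; exact hle⟩
    · rintro ⟨k, hk, hle⟩
      exact ⟨_, ⟨_, heM k hk, rfl⟩, hle⟩

end Tree

/-- For a tree `G` (labelled as usual) with parent map `φ`,
`HS_i(I^s) = I^{s-i} · (α^i/∏_{k∈F} x_{φ(k)} : F ⊆ [n-2], |F| = i)` for all
`1 ≤ i ≤ s`, where `I = I_c(G)`. -/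
theorem hs_compIdeal_pow_tree
    (K : Type) [Field K] (n : ℕ) (hn : 0 < n) (G : SimpleGraph (Fin n))
    (htree : G.IsTree)
    (hleaf : ∃! m : Fin n, G.Adj ⟨n - 1, by omega⟩ m)
    (hdist : ∀ i j : Fin n, i < j → j ≠ ⟨n - 1, by omega⟩ →
      G.dist j ⟨n - 1, by omega⟩ ≤ G.dist i ⟨n - 1, by omega⟩)
    (phi : Fin n → Fin n)
    (hphi : ∀ k : Fin n, k ≠ ⟨n - 1, by omega⟩ → k < phi k ∧ G.Adj k (phi k))
    (hphiu : ∀ k j : Fin n, k < j → G.Adj k j → j = phi k) :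
    ∀ i s : ℕ, 1 ≤ i → i ≤ s →
      HSIdeal i (compIdeal K n G ^ s) = compIdeal K n G ^ (s - i) *
        Ideal.span {p : S K n | ∃ F : Finset (Fin n),
          (∀ k ∈ F, (k : ℕ) < n - 2) ∧ F.card = i ∧
          p = monomial (i • aexp n - ∑ k ∈ F, Finsupp.single (phi k) 1) 1} := by
  intro i s hi his
  have hn2 : 2 ≤ n := by
    obtain ⟨m, hm, -⟩ := hleaf
    have h1 : (n - 1 : ℕ) ≠ m := fun h => hm.ne (Fin.ext h)
    have := m.2
    omega
  set r : Fin n := ⟨n - 1, by omega⟩ with hr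
  -- the neighbour of the leaf `r` is the vertex just below it
  have hphir : phi ⟨n - 2, by omega⟩ = r := by
    have h1 := (hphi ⟨n - 2, by omega⟩ (fun h => by simp [hr, Fin.ext_iff] at h; omega)).1
    have h2 : n - 2 < (phi ⟨n - 2, by omega⟩ : ℕ) := h1
    have h3 := (phi ⟨n - 2, by omega⟩).2
    exact Fin.ext (by simp only [hr]; omega)
  have P : ParentMap G phi r :=
    { val_r := rfl
      lt := fun k hk => (hphi k hk).1
      adj := fun k hk => (hphi k hk).2
      eq := hphiu
      ne := fun k hk hkr => by
        have hne : ∀ m : Fin n, (m : ℕ) ≤ n - 2 → m ≠ r := fun m hm h => by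
          simp [hr, Fin.ext_iff] at h; omega
        have h1 := (hphi k (hne k hk.le)).2
        have h2 := (hphi ⟨n - 2, by omega⟩ (hne _ le_rfl)).2
        rw [hkr] at h1
        rw [hphir] at h2
        have h3 := congrArg Fin.val (hleaf.unique h1.symm h2.symm)
        simp at h3
        omega }
  obtain ⟨i, rfl⟩ : ∃ j, i = j + 1 := ⟨i - 1, by omega⟩
  have hneB : ∀ F : Finset (Fin n), (∀ k ∈ F, (k : ℕ) < n - 2) → ∀ k ∈ F, k ≠ r :=
    fun F hF k hk h => by
      have h1 := hF k hk
      simp only [h, hr] at h1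
      omega
  rw [HSIdeal, P.compIdeal_pow (s - (i + 1)), Ideal.span_mul_span']
  congr 1
  ext p
  rw [Set.mem_mul]
  simp only [Set.mem_setOf_eq, P.nontrivial_iff]
  constructor
  · rintro ⟨_, ⟨c, hc, B, hB, hBc, rfl⟩, rfl⟩
    have hB' : ∀ k ∈ B, c k ≠ 0 ∧ (k : ℕ) < n - 2 := fun k hk => by
      simpa [colonSet] using hB hk
    -- one copy of each edge of `B` is split off
    obtain ⟨d, rfl⟩ : ∃ d, c = d + fun k => if k ∈ B then 1 else 0 := by
      refine ⟨c - fun k => if k ∈ B then 1 else 0, (tsub_add_cancel_of_le fun j => ?_).symm⟩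
      by_cases h : j ∈ B
      · have := (hB' j h).1
        simp only [h, if_true]; omega
      · simp [h]
    refine ⟨_, ⟨d, ⟨?_, ?_⟩, rfl⟩, _, ⟨B, fun k hk => (hB' k hk).2, hBc, rfl⟩, ?_⟩
    · have := hc.1
      simp only [Pi.add_apply] at this
      omega
    · have := hc.2
      simp [Finset.sum_add_distrib, hBc] at this
      omega
    · rw [genExp_add, add_assoc, genExp_indicator_add B fun k hk => hc.ne_phi P k (hB' k hk).1,
        hBc, monomial_mul, one_mul]
  · rintro ⟨_, ⟨d, hd, rfl⟩, _, ⟨B, hB, hBc, rfl⟩, rfl⟩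
    have hBr := hneB B hB
    refine ⟨_, ⟨d + fun k => if k ∈ B then 1 else 0, ⟨?_, ?_⟩, B, fun k hk => ?_, hBc, rfl⟩, ?_⟩
    · have : r ∉ B := fun h => hBr r h rfl
      simp [hd.1, this]
    · simp [Finset.sum_add_distrib, hBc, hd.2]
      omega
    · simp [colonSet, hk, hB k hk]
    · rw [genExp_add, add_assoc, genExp_indicator_add B fun k hk => (P.lt k (hBr k hk)).ne,
        hBc, monomial_mul, one_mul]

end Paper
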